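/- arXiv:2203.12140 — 4 statements merged into one kernel-verified Lean document; each statement's English description precedes it below -/
import Mathlib

section
/- Let A be an abelian category, X a class of objects of A, and M_{•≥−1} ≡ ⋯ → M₂ → M₁ → M₀ → M₋₁ → 0 a bounded-below complex in A which is Hom(X,−)-acyclic. For i ≥ 0 let Zᵢ := Ker(dᵢ : Mᵢ → Mᵢ₋₁) and set Z₋₁ := M₋₁. If for every i ≥ −1 there exists an epimorphism Xᵢ ↠ Zᵢ with Xᵢ ∈ X, then the complex M_{•≥−1} is exact. -/
open CategoryTheory CategoryTheory.Limits

universe w w' v u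

namespace BalancedSystems

variable {D : Type u} [Category.{v} D] [Abelian D]

/-- A class of objects is closed under isomorphisms. -/
def IsoClosed (X : Set D) : Prop := ∀ ⦃A B : D⦄, (A ≅ B) → A ∈ X → B ∈ X

/-- `f : A ⟶ B` and `g : B ⟶ E` form a short exact sequence `0 → A → B → E → 0`. -/
def IsSES {A B E : D} (f : A ⟶ B) (g : B ⟶ E) : Prop :=
  ∃ w : f ≫ g = 0, (ShortComplex.mk f g w).ShortExact

/-- A class is closed under extensions. -/
def ExtensionClosed (X : Set D) : Prop :=
  ∀ ⦃A E B : D⦄ (f : A ⟶ E) (g : E ⟶ B), A ∈ X → B ∈ X → IsSES f g → E ∈ X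

/-- A class is closed under direct summands. -/
def SummandClosed (X : Set D) : Prop :=
  ∀ ⦃A B : D⦄ (i : A ⟶ B) (r : B ⟶ A), i ≫ r = 𝟙 A → B ∈ X → A ∈ X

open ZeroObject in
/-- A class is pointed, i.e. contains the zero object. -/
def Pointed (X : Set D) : Prop := (0 : D) ∈ X

/-- A class is closed under finite coproducts. -/
def FinCoprodClosed (X : Set D) : Prop :=
  Pointed X ∧ ∀ ⦃A B : D⦄, A ∈ X → B ∈ X → (A ⊞ B) ∈ X

/-- `X` is a generator in `X''`: every object of `X''` is an epimorphic image of an object of `X`. -/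
def GeneratorIn (X X'' : Set D) : Prop :=
  ∀ M ∈ X'', ∃ A ∈ X, ∃ p : A ⟶ M, Epi p

/-- `Y` is a cogenerator in `Y''`. -/
def CogeneratorIn (Y Y'' : Set D) : Prop :=
  ∀ N ∈ Y'', ∃ B ∈ Y, ∃ j : N ⟶ B, Mono j

/-- `ω` is a relative quasi-cogenerator in `X`. -/
def RelQuasiCogenerator (ω X : Set D) : Prop :=
  ∀ M ∈ X, ∃ W ∈ ω, ∃ M' ∈ X, ∃ (f : M ⟶ W) (g : W ⟶ M'), IsSES f g

/-- `ω` is a relative cogenerator in `X`. -/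
def RelCogenerator (ω X : Set D) : Prop :=
  ω ⊆ X ∧ RelQuasiCogenerator ω X

/-- `ν` is a relative quasi-generator in `Y`. -/
def RelQuasiGenerator (ν Y : Set D) : Prop :=
  ∀ N ∈ Y, ∃ V ∈ ν, ∃ N' ∈ Y, ∃ (f : N' ⟶ V) (g : V ⟶ N), IsSES f g

/-- `ν` is a relative generator in `Y`. -/
def RelGenerator (ν Y : Set D) : Prop :=
  ν ⊆ Y ∧ RelQuasiGenerator ν Y

/-- A (not necessarily exact) left resolution `⋯ → obj 1 → obj 0 → M → 0`. -/
structure LeftRes (M : D) : Type (max u v) where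
  obj : ℕ → D
  d : ∀ n : ℕ, obj (n+1) ⟶ obj n
  aug : obj 0 ⟶ M
  dd : ∀ n : ℕ, d (n+1) ≫ d n = 0
  daug : d 0 ≫ aug = 0

namespace LeftRes

variable {M : D} (R : LeftRes M)

/-- All terms of the resolution belong to the class `X`. -/
def InClass (X : Set D) : Prop := ∀ n, R.obj n ∈ X

/-- The resolution is `Hom(X,-)`-acyclic, i.e. proper. -/
def IsProper (X : Set D) : Prop :=
  ∀ A ∈ X,
    (∀ f : A ⟶ M, ∃ g : A ⟶ R.obj 0, g ≫ R.aug = f) ∧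
    (∀ f : A ⟶ R.obj 0, f ≫ R.aug = 0 → ∃ g : A ⟶ R.obj 1, g ≫ R.d 0 = f) ∧
    (∀ (n : ℕ) (f : A ⟶ R.obj (n+1)), f ≫ R.d n = 0 → ∃ g : A ⟶ R.obj (n+2), g ≫ R.d (n+1) = f)

/-- The resolution (with its augmentation) is `Hom(-,Y)`-acyclic. -/
def IsCoacyclic (Y : Set D) : Prop :=
  ∀ B ∈ Y,
    (∀ u : M ⟶ B, R.aug ≫ u = 0 → u = 0) ∧
    (∀ u : R.obj 0 ⟶ B, R.d 0 ≫ u = 0 → ∃ v : M ⟶ B, R.aug ≫ v = u) ∧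
    (∀ (n : ℕ) (u : R.obj (n+1) ⟶ B), R.d (n+1) ≫ u = 0 → ∃ v : R.obj n ⟶ B, R.d n ≫ v = u)

/-- The augmented complex `⋯ → obj 1 → obj 0 → M → 0` is exact. -/
def IsExactRes : Prop :=
  Epi R.aug ∧ (ShortComplex.mk (R.d 0) R.aug R.daug).Exact ∧
    ∀ n : ℕ, (ShortComplex.mk (R.d (n+1)) (R.d n) (R.dd n)).Exact

/-- The resolution is admissible: `obj 1 → obj 0 → M → 0` is exact. -/
def IsAdmissible : Prop :=
  Epi R.aug ∧ (ShortComplex.mk (R.d 0) R.aug R.daug).Exact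

end LeftRes

/-- The class of objects admitting a proper left `X`-resolution. -/
def LPRes (X : Set D) : Set D :=
  {M | ∃ R : LeftRes M, R.InClass X ∧ R.IsProper X}

/-- A (not necessarily exact) right resolution `0 → N → obj 0 → obj 1 → ⋯`. -/
structure RightRes (N : D) : Type (max u v) where
  obj : ℕ → D
  d : ∀ n : ℕ, obj n ⟶ obj (n+1)
  aug : N ⟶ obj 0
  dd : ∀ n : ℕ, d n ≫ d (n+1) = 0
  daug : aug ≫ d 0 = 0

namespace RightRes

variable {N : D} (S : RightRes N)

def InClass (Y : Set D) : Prop := ∀ n, S.obj n ∈ Y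

/-- The resolution is `Hom(-,Y)`-acyclic, i.e. proper. -/
def IsProper (Y : Set D) : Prop :=
  ∀ B ∈ Y,
    (∀ f : N ⟶ B, ∃ g : S.obj 0 ⟶ B, S.aug ≫ g = f) ∧
    (∀ u : S.obj 0 ⟶ B, S.aug ≫ u = 0 → ∃ v : S.obj 1 ⟶ B, S.d 0 ≫ v = u) ∧
    (∀ (n : ℕ) (u : S.obj (n+1) ⟶ B), S.d n ≫ u = 0 → ∃ v : S.obj (n+2) ⟶ B, S.d (n+1) ≫ v = u)

/-- The resolution (with its augmentation) is `Hom(X,-)`-acyclic. -/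
def IsCoacyclic (X : Set D) : Prop :=
  ∀ A ∈ X,
    (∀ u : A ⟶ N, u ≫ S.aug = 0 → u = 0) ∧
    (∀ u : A ⟶ S.obj 0, u ≫ S.d 0 = 0 → ∃ v : A ⟶ N, v ≫ S.aug = u) ∧
    (∀ (n : ℕ) (u : A ⟶ S.obj (n+1)), u ≫ S.d (n+1) = 0 → ∃ v : A ⟶ S.obj n, v ≫ S.d n = u)

/-- The augmented complex `0 → N → obj 0 → obj 1 → ⋯` is exact. -/
def IsExactRes : Prop :=
  Mono S.aug ∧ (ShortComplex.mk S.aug (S.d 0) S.daug).Exact ∧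
    ∀ n : ℕ, (ShortComplex.mk (S.d n) (S.d (n+1)) (S.dd n)).Exact

/-- The resolution is admissible: `0 → N → obj 0 → obj 1` is exact. -/
def IsAdmissible : Prop :=
  Mono S.aug ∧ (ShortComplex.mk S.aug (S.d 0) S.daug).Exact

end RightRes

/-- The class of objects admitting a proper right `Y`-resolution. -/
def RPRes (Y : Set D) : Set D :=
  {N | ∃ S : RightRes N, S.InClass Y ∧ S.IsProper Y}

/-- `(X,Y)` is a balanced pair with respect to `(Xt,Yt)`. -/
def IsBalancedPair (X Y Xt Yt : Set D) : Prop :=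
  X ⊆ Xt ∧ Xt ⊆ LPRes X ∧ Y ⊆ Yt ∧ Yt ⊆ RPRes Y ∧
  (∀ M ∈ Xt, ∃ R : LeftRes M, R.InClass X ∧ R.IsProper X ∧ R.IsCoacyclic Y) ∧
  (∀ N ∈ Yt, ∃ S : RightRes N, S.InClass Y ∧ S.IsProper Y ∧ S.IsCoacyclic X)

/-- `(X,Y)` is an admissible balanced pair with respect to `(Xt,Yt)`. -/
def IsAdmissibleBalancedPair (X Y Xt Yt : Set D) : Prop :=
  X ⊆ Xt ∧ Xt ⊆ LPRes X ∧ Y ⊆ Yt ∧ Yt ⊆ RPRes Y ∧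
  (∀ M ∈ Xt, ∃ R : LeftRes M, R.InClass X ∧ R.IsProper X ∧ R.IsCoacyclic Y ∧ R.IsAdmissible) ∧
  (∀ N ∈ Yt, ∃ S : RightRes N, S.InClass Y ∧ S.IsProper Y ∧ S.IsCoacyclic X ∧ S.IsAdmissible)

/-- Objects of left `X`-resolution dimension at most `n`. -/
def ResDimLE (X : Set D) : ℕ → Set D
  | 0 => X
  | (n+1) => {M | ∃ K ∈ ResDimLE X n, ∃ A ∈ X, ∃ (f : K ⟶ A) (g : A ⟶ M), IsSES f g}

/-- `X^∧` : objects of finite left `X`-resolution dimension. -/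
def ResHat (X : Set D) : Set D := {M | ∃ n, M ∈ ResDimLE X n}

/-- Objects of right `X`-resolution dimension at most `n`. -/
def CoresDimLE (X : Set D) : ℕ → Set D
  | 0 => X
  | (n+1) => {M | ∃ A ∈ X, ∃ K ∈ CoresDimLE X n, ∃ (f : M ⟶ A) (g : A ⟶ K), IsSES f g}

/-- `X^∨` : objects of finite right `X`-resolution dimension. -/
def CoresVee (X : Set D) : Set D := {M | ∃ n, M ∈ CoresDimLE X n}

section Ext

variable [HasExt.{w} D]

/-- `Ext^i (A, B) = 0`. -/
def ExtZero (A B : D) (i : ℕ) : Prop := Subsingleton (Abelian.Ext.{w} A B i)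

/-- `X^⊥`: all higher Ext's from objects of `X` vanish. -/
def ExtPerp (X : Set D) : Set D :=
  {N | ∀ A ∈ X, ∀ i : ℕ, 1 ≤ i → ExtZero.{w} A N i}

/-- `^⊥Y`: all higher Ext's into objects of `Y` vanish. -/
def PerpExt (Y : Set D) : Set D :=
  {M | ∀ B ∈ Y, ∀ i : ℕ, 1 ≤ i → ExtZero.{w} M B i}

/-- `[(X,ω);(ν,Y)]` is a finite balanced system. -/
structure IsFiniteBalancedSystem (X ω ν Y : Set D) : Prop where
  pointedX : Pointed X
  extClosedX : ExtensionClosed X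
  pointedY : Pointed Y
  extClosedY : ExtensionClosed Y
  relCogenOmega : RelCogenerator ω X
  idXomega : ∀ A ∈ X, ∀ W ∈ ω, ∀ i : ℕ, 1 ≤ i → ExtZero.{w} A W i
  relGenNu : RelGenerator ν Y
  pdYnu : ∀ V ∈ ν, ∀ B ∈ Y, ∀ i : ℕ, 1 ≤ i → ExtZero.{w} V B i
  ext1_hatX_nu : ∀ M ∈ ResHat X, ∀ V ∈ ν, ExtZero.{w} M V 1
  ext1_hatOmega_Y : ∀ H ∈ ResHat ω, ∀ B ∈ Y, ExtZero.{w} H B 1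
  ext1_omega_veeY : ∀ W ∈ ω, ∀ N ∈ CoresVee Y, ExtZero.{w} W N 1
  ext1_X_veeNu : ∀ A ∈ X, ∀ L ∈ CoresVee ν, ExtZero.{w} A L 1

/-- `[(X,ω);(ν,Y)]` is a strongly finite balanced system. -/
structure IsStronglyFiniteBalancedSystem (X ω ν Y : Set D)
    extends IsFiniteBalancedSystem.{w} X ω ν Y : Prop where
  pdYomega : ∀ W ∈ ω, ∀ B ∈ Y, ∀ i : ℕ, 1 ≤ i → ExtZero.{w} W B i
  idXnu : ∀ A ∈ X, ∀ V ∈ ν, ∀ i : ℕ, 1 ≤ i → ExtZero.{w} A V i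

end Ext

end BalancedSystems
namespace BalancedSystems

variable {D : Type u} [Category.{v} D] [Abelian D]

/-- A bounded below complex `⋯ → M 2 → M 1 → M 0 → 0`, where `M 0` plays the
role of the `(-1)`-st term `M₋₁`. -/
structure BBComplex (D : Type u) [Category.{v} D] [Abelian D] : Type (max u v) where
  M : ℕ → D
  d : ∀ n : ℕ, M (n+1) ⟶ M n
  dd : ∀ n : ℕ, d (n+1) ≫ d n = 0

/-- A bounded below complex is `Hom(X,-)`-acyclic. -/
def BBComplex.HomAcyclic (X : Set D) (K : BBComplex D) : Prop :=
  ∀ A ∈ X,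
    (∀ f : A ⟶ K.M 0, ∃ g : A ⟶ K.M 1, g ≫ K.d 0 = f) ∧
    (∀ (n : ℕ) (f : A ⟶ K.M (n+1)), f ≫ K.d n = 0 →
      ∃ g : A ⟶ K.M (n+2), g ≫ K.d (n+1) = f)

/-- A short complex `Z → Mo → Z'` (i.e. `0 → Z → Mo → Z' → 0`) is
`Hom(X,-)`-acyclic. -/
def ShortHomAcyclic (X : Set D) {Z Mo Z' : D} (ι : Z ⟶ Mo) (p : Mo ⟶ Z') : Prop :=
  ∀ A ∈ X,
    (∀ u : A ⟶ Z, u ≫ ι = 0 → u = 0) ∧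
    (∀ u : A ⟶ Mo, u ≫ p = 0 → ∃ v : A ⟶ Z, v ≫ ι = u) ∧
    (∀ u : A ⟶ Z', ∃ v : A ⟶ Mo, v ≫ p = u)

namespace LeftRes

variable {M : D} (R : LeftRes M)

/-- Precomposition with the differential, as a morphism of abelian groups
`Hom(obj n, N) →+ Hom(obj (n+1), N)`. -/
def precompHom (N : D) (n : ℕ) : (R.obj n ⟶ N) →+ (R.obj (n+1) ⟶ N) :=
  AddMonoidHom.mk' (fun g => R.d n ≫ g) (by intro a b; simp)

/-- Cocycles of the complex `Hom(R, N)` in degree `n`. -/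
def cocycles (N : D) (n : ℕ) : AddSubgroup (R.obj n ⟶ N) := (R.precompHom N n).ker

/-- The relative extension groups `Ext̲ⁱ_X(M,N)` computed from the proper left
`X`-resolution `R` of `M`: the `i`-th cohomology of `Hom(R, N)`. -/
def ExtGrp (N : D) : ℕ → Type v
  | 0 => R.cocycles N 0
  | (n+1) => R.cocycles N (n+1) ⧸
      ((R.precompHom N n).range.addSubgroupOf (R.cocycles N (n+1)))

noncomputable instance (N : D) : ∀ i, AddCommGroup (R.ExtGrp N i)
  | 0 => inferInstanceAs (AddCommGroup (R.cocycles N 0))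
  | (n+1) => inferInstanceAs (AddCommGroup (R.cocycles N (n+1) ⧸
      ((R.precompHom N n).range.addSubgroupOf (R.cocycles N (n+1)))))

/-- Functoriality of `Ext̲⁰_X(M,-)`: postcomposition on `0`-cocycles. -/
def ext0Map {N N' : D} (g : N ⟶ N') (x : R.ExtGrp N 0) : R.ExtGrp N' 0 :=
  (⟨(x : R.cocycles N 0).1 ≫ g, by
      have hx := (x : R.cocycles N 0).2
      simp only [cocycles, AddMonoidHom.mem_ker, precompHom, AddMonoidHom.mk'_apply] at hx ⊢
      rw [← Category.assoc, hx, zero_comp]⟩ : R.cocycles N' 0)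

end LeftRes

namespace RightRes

variable {N : D} (S : RightRes N)

/-- Postcomposition with the differential, as a morphism of abelian groups
`Hom(M, obj n) →+ Hom(M, obj (n+1))`. -/
def postcompHom (M : D) (n : ℕ) : (M ⟶ S.obj n) →+ (M ⟶ S.obj (n+1)) :=
  AddMonoidHom.mk' (fun g => g ≫ S.d n) (by intro a b; simp)

/-- Cocycles of the complex `Hom(M, S)` in degree `n`. -/
def cocycles (M : D) (n : ℕ) : AddSubgroup (M ⟶ S.obj n) := (S.postcompHom M n).ker

/-- The relative extension groups `Ext̄ⁱ_Y(M,N)` computed from the proper right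
`Y`-resolution `S` of `N`: the `i`-th cohomology of `Hom(M, S)`. -/
def ExtGrp (M : D) : ℕ → Type v
  | 0 => S.cocycles M 0
  | (n+1) => S.cocycles M (n+1) ⧸
      ((S.postcompHom M n).range.addSubgroupOf (S.cocycles M (n+1)))

noncomputable instance (M : D) : ∀ i, AddCommGroup (S.ExtGrp M i)
  | 0 => inferInstanceAs (AddCommGroup (S.cocycles M 0))
  | (n+1) => inferInstanceAs (AddCommGroup (S.cocycles M (n+1) ⧸
      ((S.postcompHom M n).range.addSubgroupOf (S.cocycles M (n+1)))))

end RightRes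

section ChainComplexes

/-- The class of complexes all of whose terms lie in `X`. -/
def chClass (X : Set D) : Set (ChainComplex D ℤ) := {K | ∀ n : ℤ, K.X n ∈ X}

/-- `ν̃` : the class of exact complexes all of whose cycle objects lie in `ν`. -/
noncomputable def tildeClass (ν : Set D) : Set (ChainComplex D ℤ) :=
  {K | (∀ n : ℤ, K.ExactAt n) ∧ ∀ n : ℤ, (kernel (K.d n (n-1)) : D) ∈ ν}

end ChainComplexes

end BalancedSystems
namespace BalancedSystems

variable {D : Type u} [Category.{v} D] [Abelian D]

section HomComplex

variable (K L : ChainComplex D ℤ)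

/-- The `m`-th term of the Hom-complex `Hom(K,L)`:
`∏ᵢ Hom(Kᵢ, L_{i+m})`. -/
abbrev HomCgrp (m : ℤ) : Type v := ∀ i : ℤ, K.X i ⟶ L.X (i + m)

/-- The differential `∂_m` of the Hom-complex `Hom(K,L)`, going from degree `m`
to degree `m' = m - 1`, given by `∂_m(f)ᵢ = ∂^L_{m+i} ∘ fᵢ − (−1)^m fᵢ₋₁ ∘ ∂^K_i`. -/
noncomputable def homCdiff (m m' : ℤ) (h : m' = m - 1) :
    HomCgrp K L m →+ HomCgrp K L m' :=
  AddMonoidHom.mk'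
    (fun f i => f i ≫ L.d (i + m) (i + m') -
      (m.negOnePow : ℤ) •
        (K.d i (i-1) ≫ f (i-1) ≫ eqToHom (congrArg L.X (show (i-1) + m = i + m' by omega))))
    (by
      intro a b
      funext i
      simp only [Pi.add_apply, Preadditive.add_comp, Preadditive.comp_add, smul_add]
      abel)

/-- The `m`-th cohomology group of the Hom-complex `Hom(K,L)`. -/
noncomputable def HomCoh (m : ℤ) : Type v :=
  (homCdiff K L m (m-1) rfl).ker ⧸
    ((homCdiff K L (m+1) m (by omega)).range.addSubgroupOf (homCdiff K L m (m-1) rfl).ker)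

noncomputable instance (m : ℤ) : AddCommGroup (HomCoh K L m) :=
  inferInstanceAs (AddCommGroup ((homCdiff K L m (m-1) rfl).ker ⧸
    ((homCdiff K L (m+1) m (by omega)).range.addSubgroupOf (homCdiff K L m (m-1) rfl).ker)))

end HomComplex

end BalancedSystems
namespace BalancedSystems

variable {D : Type u} [Category.{v} D] [Abelian D]

/-- `L_X(X',X'')`: objects of `X''` admitting a proper left `X`-resolution with
all cycles in `X'`. -/
noncomputable def LClass (X X' X'' : Set D) : Set D :=
  {M | M ∈ X'' ∧ ∃ R : LeftRes M, R.InClass X ∧ R.IsProper X ∧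
    (kernel R.aug : D) ∈ X' ∧ ∀ n : ℕ, (kernel (R.d n) : D) ∈ X'}

/-- `L̄_X(X',X'') := L_X(X',X'') ∪ X`. -/
noncomputable def LBarClass (X X' X'' : Set D) : Set D := LClass X X' X'' ∪ X

/-- `R^Y(Y'',Y')`: objects of `Y''` admitting a proper right `Y`-resolution with
all cocycles in `Y'`. -/
noncomputable def RClass (Y Y'' Y' : Set D) : Set D :=
  {N | N ∈ Y'' ∧ ∃ S : RightRes N, S.InClass Y ∧ S.IsProper Y ∧
    (cokernel S.aug : D) ∈ Y' ∧ ∀ n : ℕ, (cokernel (S.d n) : D) ∈ Y'}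

/-- `R̄^Y(Y'',Y') := R^Y(Y'',Y') ∪ Y`. -/
noncomputable def RBarClass (Y Y'' Y' : Set D) : Set D := RClass Y Y'' Y' ∪ Y

section Ext

variable [HasExt.{w} D]

/-- `[(X,ω);(ν,Y)]` is a balanced system with respect to `[(X',X'');(Y'',Y')]`. -/
def IsBalancedSystem (X ω ν Y X' X'' Y'' Y' : Set D) : Prop :=
  (X ⊆ X'' ∧ X' ⊆ X'' ∧ X'' ⊆ LPRes X) ∧
  (Y ⊆ Y'' ∧ Y' ⊆ Y'' ∧ Y'' ⊆ RPRes Y) ∧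
  GeneratorIn X X'' ∧
  CogeneratorIn Y Y'' ∧
  RelGenerator ν Y ∧
  RelCogenerator ω X ∧
  ((∀ M ∈ X'', ∀ V ∈ ν, ExtZero.{w} M V 1) ∧ (∀ L ∈ X', ∀ B ∈ Y, ExtZero.{w} L B 1)) ∧
  ((∀ W ∈ ω, ∀ N ∈ Y'', ExtZero.{w} W N 1) ∧ (∀ A ∈ X, ∀ P ∈ Y', ExtZero.{w} A P 1))

/-- `(X,Y)` is a complete hereditary cotorsion pair. -/
def IsCompleteHereditaryCotorsionPair (X Y : Set D) : Prop :=
  (∀ M : D, M ∈ X ↔ ∀ B ∈ Y, ExtZero.{w} M B 1) ∧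
  (∀ N : D, N ∈ Y ↔ ∀ A ∈ X, ExtZero.{w} A N 1) ∧
  (∀ M : D, ∃ K ∈ Y, ∃ A ∈ X, ∃ (f : K ⟶ A) (g : A ⟶ M), IsSES f g) ∧
  (∀ M : D, ∃ B ∈ Y, ∃ Q ∈ X, ∃ (f : M ⟶ B) (g : B ⟶ Q), IsSES f g) ∧
  (∀ A ∈ X, ∀ B ∈ Y, ∀ i : ℕ, 1 ≤ i → ExtZero.{w} A B i)

/-- `LPRes⁰(X)`: objects of `LPRes(X)` admitting an exact left `X`-resolution
with all cycles in `X^⊥`. -/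
noncomputable def LPRes0 (X : Set D) : Set D :=
  LPRes X ∩ {M | ∃ R : LeftRes M, R.InClass X ∧ R.IsExactRes ∧
    (kernel R.aug : D) ∈ ExtPerp.{w} X ∧ ∀ n : ℕ, (kernel (R.d n) : D) ∈ ExtPerp.{w} X}

/-- `RPRes⁰(Y)`: objects of `RPRes(Y)` admitting an exact right `Y`-resolution
with all cocycles in `^⊥Y`. -/
noncomputable def RPRes0 (Y : Set D) : Set D :=
  RPRes Y ∩ {N | ∃ S : RightRes N, S.InClass Y ∧ S.IsExactRes ∧
    (cokernel S.aug : D) ∈ PerpExt.{w} Y ∧ ∀ n : ℕ, (cokernel (S.d n) : D) ∈ PerpExt.{w} Y}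

end Ext

end BalancedSystems


open BalancedSystems in
/-- If a bounded-below complex `M_{•≥−1}` is `Hom(X,−)`-acyclic
and every cycle `Zᵢ` (`i ≥ −1`, with `Z₋₁ = M₋₁`) is an epimorphic image of an
object of `X`, then the complex is exact. Here `K.M 0` plays the role of
`M₋₁`. -/
theorem statement1 {C : Type u} [Category.{v} C] [Abelian C]
    (𝒳 : Set C) (h𝒳 : IsoClosed 𝒳) (K : BBComplex C)
    (hac : K.HomAcyclic 𝒳)
    (hm1 : ∃ A ∈ 𝒳, ∃ p : A ⟶ K.M 0, Epi p)
    (hk : ∀ i : ℕ, ∃ A ∈ 𝒳, ∃ p : A ⟶ (kernel (K.d i) : C), Epi p) :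
    Epi (K.d 0) ∧ ∀ n : ℕ, (ShortComplex.mk (K.d (n+1)) (K.d n) (K.dd n)).Exact := by
  constructor
  · -- An epimorphism `p : A ⟶ M₋₁` with `A ∈ 𝒳` lifts through `d 0`.
    obtain ⟨A, hA, p, hp⟩ := hm1
    obtain ⟨g, hg⟩ := (hac A hA).1 p
    subst hg
    exact epi_of_epi g (K.d 0)
  · intro n
    rw [ShortComplex.exact_iff_epi_kernel_lift]
    obtain ⟨A, hA, p, hp⟩ := hk n
    -- The cycle `A ↠ Zₙ ↪ M (n+1)` is a boundary, so `p` factors through `M (n+2) ⟶ Zₙ`.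
    obtain ⟨g, hg⟩ := (hac A hA).2 n (p ≫ kernel.ι (K.d n)) (by simp)
    have hfac : g ≫ kernel.lift (K.d n) (K.d (n+1)) (K.dd n) = p := by
      rw [← cancel_mono (kernel.ι (K.d n)), Category.assoc, kernel.lift_ι, hg]
    exact epi_of_epi_fac hfac
end

section
/- Let X be a class of objects of an abelian category A closed under finite coproducts, and let 𝕄 ≡ 0 → M′ →α M →β M″ → 0 be a Hom(X,−)-acyclic complex (not assumed exact). If ε′ : X•(M′) → M′ and ε″ : X•(M″) → M″ are proper left X-resolutions, then there exist a proper left X-resolution ε : X•(M) → M and a degreewise split exact sequence of complexes 0 → X•(M′) →ᾱ X•(M) →β̄ X•(M″) → 0 such that ε ∘ ᾱ₀ = α ∘ ε′ and ε″ ∘ β̄₀ = β ∘ ε. -/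
/-!
The resolution of `M` has terms `X'ₙ ⊞ X''ₙ`, upper triangular differentials
`(x', x'') ↦ (d' x' + θₙ x'', d'' x'')` and augmentation `(x', x'') ↦ α (ε' x') + σ x''`.
Here `σ : X''₀ ⟶ M` lifts `ε''` through `β`, and the `θₙ : X''ₙ₊₁ ⟶ X'ₙ` are built recursively so
that the squares of the differentials vanish: `α ε' θ₀ = -σ d''₀` and `d'ₙ θₙ₊₁ = -θₙ d''ₙ₊₁`
(`exists_twist`, `exists_twist_seq`). Since the sources of all these maps lie in the class `𝒳`,
`Hom(𝒳, -)`-acyclicity of the given complexes is what provides each lift; exactness in the abelian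
category is never used. Properness of the triangular complex is, in positive and zero degrees
alike, the diagram chase `exists_triangular_lift`. The inclusions and projections of the
biproducts give the degreewise split sequence.
-/

open CategoryTheory CategoryTheory.Limits

universe w w' v u

namespace BalancedSystems.Horseshoe

variable {C : Type u} [Category.{v} C] [Abelian C] {M' M M'' : C}

/-- The chase behind properness. A pair `(f', f'')` killed by the triangular matrix with entries
`e`, `θ`, `e''` lifts along the triangular matrix with entries `d'`, `θ₁`, `d''`, as soon as lifting
is possible for each of the two diagonal sequences. -/
lemma exists_triangular_lift {A P' P'' Q' Q'' N N'' : C}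
    {d' : Q' ⟶ P'} {d'' : Q'' ⟶ P''} {e : P' ⟶ N} {e'' : P'' ⟶ N''}
    {θ : P'' ⟶ N} {θ₁ : Q'' ⟶ P'} (hθ : θ₁ ≫ e = -(d'' ≫ θ))
    (h' : ∀ f : A ⟶ P', f ≫ e = 0 → ∃ g, g ≫ d' = f)
    (h'' : ∀ f : A ⟶ P'', f ≫ e'' = 0 → ∃ g, g ≫ d'' = f)
    (f' : A ⟶ P') (f'' : A ⟶ P'') (hf : f' ≫ e + f'' ≫ θ = 0) (hf'' : f'' ≫ e'' = 0) :
    ∃ (g' : A ⟶ Q') (g'' : A ⟶ Q''), g' ≫ d' + g'' ≫ θ₁ = f' ∧ g'' ≫ d'' = f'' := by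
  obtain ⟨g'', rfl⟩ := h'' f'' hf''
  obtain ⟨g', hg'⟩ := h' (f' - g'' ≫ θ₁) (by
    rw [← hf, Preadditive.sub_comp, Category.assoc, hθ, Preadditive.comp_neg, Category.assoc,
      sub_neg_eq_add])
  exact ⟨g', g'', by rw [hg', sub_add_cancel], rfl⟩

/-- The lift `σ` of `ε''` together with the first off-diagonal entry `θ₀`. The last equation, which
follows because `α` is `𝒳`-monic, makes the recursion for the later entries start. -/
lemma exists_twist {𝒳 : Set C} {α : M' ⟶ M} {β : M ⟶ M''} (hac : ShortHomAcyclic 𝒳 α β)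
    {R' : LeftRes M'} (hR'p : R'.IsProper 𝒳) {R'' : LeftRes M''} (hR''c : R''.InClass 𝒳) :
    ∃ (σ : R''.obj 0 ⟶ M) (θ : R''.obj 1 ⟶ R'.obj 0), σ ≫ β = R''.aug ∧
      θ ≫ R'.aug ≫ α = -(R''.d 0 ≫ σ) ∧ (R''.d 1 ≫ θ) ≫ R'.aug = 0 := by
  obtain ⟨σ, hσ⟩ := (hac _ (hR''c 0)).2.2 R''.aug
  obtain ⟨v, hv⟩ := (hac _ (hR''c 1)).2.1 (-(R''.d 0 ≫ σ)) (by simp [hσ, R''.daug])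
  obtain ⟨θ, rfl⟩ := (hR'p _ (hR''c 1)).1 v
  rw [Category.assoc] at hv
  refine ⟨σ, θ, hσ, hv, (hac _ (hR''c 2)).1 _ ?_⟩
  simp only [Category.assoc, hv, Preadditive.comp_neg]
  rw [← Category.assoc, R''.dd, zero_comp, neg_zero]

/-- Off-diagonal entries in all degrees, starting from a given `θ₀`. -/
lemma exists_twist_seq {𝒳 : Set C} {R' : LeftRes M'} (hR'p : R'.IsProper 𝒳) {R'' : LeftRes M''}
    (hR''c : R''.InClass 𝒳) (θ₀ : R''.obj 1 ⟶ R'.obj 0) (h₀ : (R''.d 1 ≫ θ₀) ≫ R'.aug = 0) :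
    ∃ θ : ∀ n, R''.obj (n+1) ⟶ R'.obj n, θ 0 = θ₀ ∧
      ∀ n, θ (n+1) ≫ R'.d n = -(R''.d (n+1) ≫ θ n) := by
  -- The recursion carries along the fact that the next entry exists.
  let S (n : ℕ) := {t : R''.obj (n+1) ⟶ R'.obj n // ∃ t', t' ≫ R'.d n = -(R''.d (n+1) ≫ t)}
  have start : ∃ t', t' ≫ R'.d 0 = -(R''.d 1 ≫ θ₀) :=
    (hR'p _ (hR''c 2)).2.1 _ (by rw [Preadditive.neg_comp, h₀, neg_zero])
  have step (n : ℕ) (t : S n) : ∃ t' : S (n+1), t'.1 ≫ R'.d n = -(R''.d (n+1) ≫ t.1) := by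
    obtain ⟨t, t', ht'⟩ := t
    refine ⟨⟨t', (hR'p _ (hR''c (n+3))).2.2 n _ ?_⟩, ht'⟩
    rw [Preadditive.neg_comp, Category.assoc, ht', Preadditive.comp_neg, neg_neg,
      ← Category.assoc, R''.dd, zero_comp]
  choose next hnext using step
  let s (n : ℕ) : S n := Nat.rec ⟨θ₀, start⟩ next n
  exact ⟨fun n => (s n).1, rfl, fun n => hnext n (s n)⟩

/-- The triangular resolution of `M` on the biproducts `X'ₙ ⊞ X''ₙ`, with off-diagonal entries
`θ n` in the differentials and `σ` in the augmentation. -/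
noncomputable def triangular {α : M' ⟶ M} (R' : LeftRes M') (R'' : LeftRes M'')
    (σ : R''.obj 0 ⟶ M) (θ : ∀ n, R''.obj (n+1) ⟶ R'.obj n)
    (h₀ : θ 0 ≫ R'.aug ≫ α = -(R''.d 0 ≫ σ))
    (hθ : ∀ n, θ (n+1) ≫ R'.d n = -(R''.d (n+1) ≫ θ n)) : LeftRes M where
  obj n := R'.obj n ⊞ R''.obj n
  d n := biprod.lift (biprod.desc (R'.d n) (θ n)) (biprod.snd ≫ R''.d n)
  aug := biprod.desc (R'.aug ≫ α) σ
  dd n := by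
    ext <;> simp [biprod.lift_desc, hθ, R'.dd, R''.dd]
  daug := by
    ext
    · simp [biprod.lift_desc, reassoc_of% R'.daug]
    · simp [biprod.lift_desc, h₀]

lemma triangular_isProper {𝒳 : Set C} {α : M' ⟶ M} {β : M ⟶ M''} (w : α ≫ β = 0)
    (hac : ShortHomAcyclic 𝒳 α β) {R' : LeftRes M'} (hR'p : R'.IsProper 𝒳) {R'' : LeftRes M''}
    (hR''p : R''.IsProper 𝒳) (σ : R''.obj 0 ⟶ M) (hσ : σ ≫ β = R''.aug)
    (θ : ∀ n, R''.obj (n+1) ⟶ R'.obj n) (h₀ : θ 0 ≫ R'.aug ≫ α = -(R''.d 0 ≫ σ))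
    (hθ : ∀ n, θ (n+1) ≫ R'.d n = -(R''.d (n+1) ≫ θ n)) :
    (triangular R' R'' σ θ h₀ hθ).IsProper 𝒳 := by
  intro A hA
  obtain ⟨hα, hexact, hβ⟩ := hac A hA
  obtain ⟨p', q', r'⟩ := hR'p A hA
  obtain ⟨p'', q'', r''⟩ := hR''p A hA
  refine ⟨fun f => ?_, fun f hf => ?_, fun n f hf => ?_⟩
  · obtain ⟨g'', hg''⟩ := p'' (f ≫ β)
    obtain ⟨v, hv⟩ := hexact (f - g'' ≫ σ) (by simp [hσ, hg''])
    obtain ⟨g', rfl⟩ := p' v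
    refine ⟨biprod.lift g' g'', ?_⟩
    rw [Category.assoc] at hv
    simp [triangular, biprod.lift_desc, hv]
  · change A ⟶ R'.obj 0 ⊞ R''.obj 0 at f
    replace hf : f ≫ biprod.desc (R'.aug ≫ α) σ = 0 := hf
    have hf₁ : (f ≫ biprod.fst) ≫ R'.aug ≫ α + (f ≫ biprod.snd) ≫ σ = 0 := by
      rw [← hf]
      simp [biprod.desc_eq]
    have hf₂ : (f ≫ biprod.snd) ≫ R''.aug = 0 := by
      have := hf₁ =≫ β
      simpa [w, hσ] using this
    obtain ⟨g', g'', h1, h2⟩ := exists_triangular_lift h₀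
      (fun f hf => q' f (hα _ (by rw [Category.assoc, hf]))) q'' _ _ hf₁ hf₂
    refine ⟨biprod.lift g' g'', biprod.hom_ext _ _ ?_ ?_⟩
    · simpa [triangular, biprod.lift_desc] using h1
    · simpa [triangular] using h2
  · change A ⟶ R'.obj (n+1) ⊞ R''.obj (n+1) at f
    replace hf : f ≫ biprod.lift (biprod.desc (R'.d n) (θ n)) (biprod.snd ≫ R''.d n) = 0 := hf
    have hf₁ : (f ≫ biprod.fst) ≫ R'.d n + (f ≫ biprod.snd) ≫ θ n = 0 := by
      have := hf =≫ biprod.fst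
      simpa [biprod.desc_eq] using this
    have hf₂ : (f ≫ biprod.snd) ≫ R''.d n = 0 := by
      have := hf =≫ biprod.snd
      simpa using this
    obtain ⟨g', g'', h1, h2⟩ := exists_triangular_lift (hθ n) (r' n) (r'' n) _ _ hf₁ hf₂
    refine ⟨biprod.lift g' g'', biprod.hom_ext _ _ ?_ ?_⟩
    · simpa [triangular, biprod.lift_desc] using h1
    · simpa [triangular] using h2

lemma isSES_biprod (A B : C) : IsSES (biprod.inl : A ⟶ A ⊞ B) biprod.snd :=
  ⟨biprod.inl_snd, ShortComplex.Splitting.shortExact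
    { r := biprod.fst, s := biprod.inr, f_r := by simp, s_g := by simp, id := by simp }⟩

end BalancedSystems.Horseshoe

open BalancedSystems in
/-- Horseshoe lemma. Let `X` be closed under finite
coproducts and `0 → M′ →α M →β M″ → 0` a `Hom(X,−)`-acyclic complex. Given
proper left `X`-resolutions of `M′` and `M″`, there is a proper left
`X`-resolution of `M` and a degreewise split exact sequence of complexes
compatible with `α` and `β`. -/
theorem statement2 {C : Type u} [Category.{v} C] [Abelian C]
    (𝒳 : Set C) (h𝒳 : IsoClosed 𝒳) (hcp : FinCoprodClosed 𝒳)
    {M' M M'' : C} (α : M' ⟶ M) (β : M ⟶ M'') (w : α ≫ β = 0)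
    (hac : ShortHomAcyclic 𝒳 α β)
    (R' : LeftRes M') (hR'c : R'.InClass 𝒳) (hR'p : R'.IsProper 𝒳)
    (R'' : LeftRes M'') (hR''c : R''.InClass 𝒳) (hR''p : R''.IsProper 𝒳) :
    ∃ R : LeftRes M, R.InClass 𝒳 ∧ R.IsProper 𝒳 ∧
      ∃ (a : ∀ n : ℕ, R'.obj n ⟶ R.obj n) (b : ∀ n : ℕ, R.obj n ⟶ R''.obj n),
        (∀ n : ℕ, R'.d n ≫ a n = a (n+1) ≫ R.d n) ∧
        (∀ n : ℕ, R.d n ≫ b n = b (n+1) ≫ R''.d n) ∧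
        a 0 ≫ R.aug = R'.aug ≫ α ∧
        b 0 ≫ R''.aug = R.aug ≫ β ∧
        (∀ n : ℕ, IsSES (a n) (b n)) ∧
        (∀ n : ℕ, ∃ (r : R.obj n ⟶ R'.obj n) (s : R''.obj n ⟶ R.obj n),
          a n ≫ r = 𝟙 (R'.obj n) ∧ s ≫ b n = 𝟙 (R''.obj n) ∧
          r ≫ a n + b n ≫ s = 𝟙 (R.obj n)) := by
  obtain ⟨σ, θ₀, hσ, h₀, h₁⟩ := Horseshoe.exists_twist hac hR'p hR''c
  obtain ⟨θ, rfl, hθ⟩ := Horseshoe.exists_twist_seq hR'p hR''c θ₀ h₁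
  refine ⟨Horseshoe.triangular R' R'' σ θ h₀ hθ, fun n => hcp.2 (hR'c n) (hR''c n),
    Horseshoe.triangular_isProper w hac hR'p hR''p σ hσ θ h₀ hθ,
    fun n => biprod.inl, fun n => biprod.snd, fun n => ?_, fun n => ?_, ?_, ?_,
    fun n => Horseshoe.isSES_biprod _ _,
    fun n => ⟨biprod.fst, biprod.inr, biprod.inl_fst, biprod.inr_snd, biprod.total⟩⟩
  · apply biprod.hom_ext <;> simp [Horseshoe.triangular]
  · simp [Horseshoe.triangular]
  · simp [Horseshoe.triangular]
  · apply biprod.hom_ext' <;> simp [Horseshoe.triangular, w, hσ]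
end

section
/- Let X be a class of objects of an abelian category A closed under finite coproducts, N ∈ A, and 0 → M′ → M → M″ → 0 a Hom(X,−)-acyclic complex with M′, M″ ∈ LPRes(X). Then M ∈ LPRes(X) and there is a long exact sequence of abelian groups 0 → Ext̲⁰_X(M″,N) → Ext̲⁰_X(M,N) → Ext̲⁰_X(M′,N) → Ext̲¹_X(M″,N) → ⋯ → Ext̲ⁱ_X(M″,N) → Ext̲ⁱ_X(M,N) → Ext̲ⁱ_X(M′,N) → Ext̲^{i+1}_X(M″,N) → ⋯. -/
/-! The argument is the relative horseshoe lemma followed by the long exact cohomology sequence of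
a degreewise split sequence of complexes.

Since `Hom(A, β)` is onto for `A` in the class, the augmentation of `R''` lifts along `β` to
`σ : R''₀ ⟶ M`. Then `d''₀ ≫ σ` factors through `α`, and properness of `R'` gives a morphism
`θ₀ : R''₁ ⟶ R'₀`; inductively one gets `θₙ : R''ₙ₊₁ ⟶ R'ₙ` with
`θₙ₊₁ ≫ d'ₙ + d''ₙ₊₁ ≫ θₙ = 0` (`exists_twist`). The upper triangular differentials with
off-diagonal entry `θ` turn the sums `R'ₙ ⊞ R''ₙ` into a resolution of `M` (`horseshoe`), and a
diagram chase shows that it is proper (`horseshoe_isProper`).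

A cochain of `Hom(R, N)` is a pair `(u', u'')` with differential
`(d' ≫ u', θ ≫ u' + d'' ≫ u'')`. The maps of the long exact sequence are induced by
`u'' ↦ (0, u'')`, `(u', u'') ↦ u'` and the connecting map `u' ↦ θ ≫ u'`, and exactness is checked
on cocycles. `ExtGrp` is defined separately in degree zero and in positive degrees; the
presentation `ExtGrp ≅ cocycles / coboundaries`, with zero coboundaries in degree `0`, lets all
degrees be treated at once. -/

open CategoryTheory CategoryTheory.Limits

universe w w' v u

namespace BalancedSystems

variable {D : Type u} [Category.{v} D] [Abelian D]

namespace LeftRes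

/-! ### Relative extension groups as cocycles modulo coboundaries -/

section Presentation

variable {M M₁ : D} (R : LeftRes M) (S : LeftRes M₁) (N : D)

/-- Coboundaries of `Hom(R, N)` in degree `i`; there are only trivial ones in degree `0`. -/
def coboundaries : ∀ i : ℕ, AddSubgroup (R.obj i ⟶ N)
  | 0 => ⊥
  | (n+1) => (R.precompHom N n).range

/-- The class of a cocycle in the relative extension group. -/
noncomputable def extMk : ∀ i : ℕ, R.cocycles N i →+ R.ExtGrp N i
  | 0 => AddMonoidHom.id (R.cocycles N 0)
  | (n+1) => QuotientAddGroup.mk'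
      ((R.precompHom N n).range.addSubgroupOf (R.cocycles N (n+1)))

variable {N}

lemma mem_cocycles {i : ℕ} {u : R.obj i ⟶ N} : u ∈ R.cocycles N i ↔ R.d i ≫ u = 0 :=
  Iff.rfl

lemma mem_coboundaries_zero {u : R.obj 0 ⟶ N} : u ∈ R.coboundaries N 0 ↔ u = 0 :=
  Iff.rfl

lemma mem_coboundaries_succ {n : ℕ} {u : R.obj (n+1) ⟶ N} :
    u ∈ R.coboundaries N (n+1) ↔ ∃ v : R.obj n ⟶ N, R.d n ≫ v = u :=
  Iff.rfl

lemma coboundaries_le_cocycles (i : ℕ) : R.coboundaries N i ≤ R.cocycles N i := by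
  intro u hu
  cases i with
  | zero =>
    rw [R.mem_coboundaries_zero.1 hu]
    exact zero_mem _
  | succ n =>
    obtain ⟨v, rfl⟩ := R.mem_coboundaries_succ.1 hu
    rw [mem_cocycles, ← Category.assoc, R.dd, zero_comp]

lemma extMk_surjective (i : ℕ) : Function.Surjective (R.extMk N i) := by
  cases i with
  | zero => exact fun x => ⟨x, rfl⟩
  | succ n => exact QuotientAddGroup.mk'_surjective _

lemma extMk_eq_zero {i : ℕ} (u : R.cocycles N i) :
    R.extMk N i u = 0 ↔ (u : R.obj i ⟶ N) ∈ R.coboundaries N i := by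
  cases i with
  | zero =>
    rw [mem_coboundaries_zero]
    exact Subtype.ext_iff (a1 := u) (a2 := 0)
  | succ n =>
    exact (QuotientAddGroup.eq_zero_iff u).trans AddSubgroup.mem_addSubgroupOf

variable {R S}

lemma extMk_eq {i : ℕ} {u v : R.cocycles N i}
    (h : (u : R.obj i ⟶ N) - v ∈ R.coboundaries N i) : R.extMk N i u = R.extMk N i v := by
  rw [← sub_eq_zero, ← map_sub, extMk_eq_zero]
  exact h

/-- The map on extension groups induced by a homomorphism of cochain groups that preserves cocycles
and coboundaries; the degrees `i` and `j` may differ, so that connecting maps are included. -/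
noncomputable def extMap {i j : ℕ} (φ : (R.obj i ⟶ N) →+ (S.obj j ⟶ N))
    (hZ : ∀ u ∈ R.cocycles N i, φ u ∈ S.cocycles N j)
    (hB : ∀ u ∈ R.coboundaries N i, φ u ∈ S.coboundaries N j) :
    R.ExtGrp N i →+ S.ExtGrp N j :=
  (R.extMk N i).liftOfSurjective (R.extMk_surjective i)
    ⟨(S.extMk N j).comp ((φ.comp (R.cocycles N i).subtype).codRestrict (S.cocycles N j)
      fun u => hZ u.1 u.2), fun u hu =>
        (S.extMk_eq_zero _).2 (hB u.1 ((R.extMk_eq_zero u).1 hu))⟩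

lemma extMap_extMk {i j : ℕ} (φ : (R.obj i ⟶ N) →+ (S.obj j ⟶ N))
    (hZ : ∀ u ∈ R.cocycles N i, φ u ∈ S.cocycles N j)
    (hB : ∀ u ∈ R.coboundaries N i, φ u ∈ S.coboundaries N j) (u : R.cocycles N i) :
    extMap φ hZ hB (R.extMk N i u) = S.extMk N j ⟨φ u.1, hZ u.1 u.2⟩ :=
  (R.extMk N i).liftOfRightInverse_comp_apply _ _ _ u

end Presentation

/-! ### The relative horseshoe lemma -/

section Horseshoe

variable {M' M M'' : D} {R' : LeftRes M'} {R'' : LeftRes M''} {β : M ⟶ M''} {α : M' ⟶ M}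

/-- The off-diagonal data of a horseshoe resolution of `M`: a morphism `σ : R''₀ ⟶ M` lifting the
augmentation of `R''` along `β`, and morphisms `θₙ : R''ₙ₊₁ ⟶ R'ₙ` for which the triangular
differentials square to zero. -/
structure Twist (α : M' ⟶ M) (β : M ⟶ M'') (R' : LeftRes M') (R'' : LeftRes M'') where
  σ : R''.obj 0 ⟶ M
  θ : ∀ n : ℕ, R''.obj (n+1) ⟶ R'.obj n
  σβ : σ ≫ β = R''.aug
  θ_zero : θ 0 ≫ R'.aug ≫ α + R''.d 0 ≫ σ = 0
  θ_succ : ∀ n, θ (n+1) ≫ R'.d n + R''.d (n+1) ≫ θ n = 0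

/-- The morphism `σ` comes from surjectivity of `Hom(R''₀, β)`, and the `θₙ` are built one after the
other by properness of `R'`. -/
lemma exists_twist {X : Set D} (hac : ShortHomAcyclic X α β)
    (hR'p : R'.IsProper X) (hR''c : R''.InClass X) :
    Nonempty (Twist α β R' R'') := by
  obtain ⟨σ, hσ⟩ := (hac _ (hR''c 0)).2.2 R''.aug
  obtain ⟨v, hv⟩ := (hac _ (hR''c 1)).2.1 (R''.d 0 ≫ σ) (by rw [Category.assoc, hσ, R''.daug])
  obtain ⟨t, ht⟩ := (hR'p _ (hR''c 1)).1 (-v)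
  have h0 : t ≫ R'.aug ≫ α + R''.d 0 ≫ σ = 0 := by
    rw [← Category.assoc, ht, ← hv]
    simp
  have h1 : (R''.d 1 ≫ t) ≫ R'.aug = 0 := by
    refine (hac _ (hR''c 2)).1 _ ?_
    rw [Category.assoc, Category.assoc, eq_neg_of_add_eq_zero_left h0, Preadditive.comp_neg,
      ← Category.assoc, R''.dd, zero_comp, neg_zero]
  obtain ⟨t₁, ht₁⟩ := (hR'p _ (hR''c 2)).2.1 (-(R''.d 1 ≫ t)) (by
    rw [Preadditive.neg_comp, h1, neg_zero])
  -- A candidate for `θₙ` is carried along with the existence of a compatible `θₙ₊₁`.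
  let P (n : ℕ) : Type v := {t : R''.obj (n+1) ⟶ R'.obj n //
    ∃ t' : R''.obj (n+2) ⟶ R'.obj (n+1), t' ≫ R'.d n + R''.d (n+1) ≫ t = 0}
  have step (n : ℕ) (p : P n) : ∃ q : P (n+1), q.1 ≫ R'.d n + R''.d (n+1) ≫ p.1 = 0 := by
    obtain ⟨t', ht'⟩ := p.2
    obtain ⟨t'', ht''⟩ := (hR'p _ (hR''c (n+3))).2.2 n (-(R''.d (n+2) ≫ t')) (by
      rw [Preadditive.neg_comp, Category.assoc, eq_neg_of_add_eq_zero_left ht',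
        Preadditive.comp_neg, ← Category.assoc, R''.dd, zero_comp, neg_zero, neg_zero])
    exact ⟨⟨t', t'', by rw [ht'', neg_add_cancel]⟩, ht'⟩
  choose next hnext using step
  let p₀ : P 0 := ⟨t, t₁, by rw [ht₁, neg_add_cancel]⟩
  let θ (n : ℕ) : P n := Nat.rec p₀ next n
  exact ⟨⟨σ, fun n => (θ n).1, hσ, h0, fun n => hnext n (θ n)⟩⟩

variable (T : Twist α β R' R'') {N : D}

/-- The horseshoe resolution of `M`, with terms `R'ₙ ⊞ R''ₙ` and triangular differentials. -/
noncomputable def horseshoe : LeftRes M where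
  obj n := R'.obj n ⊞ R''.obj n
  d n := biprod.desc (R'.d n ≫ biprod.inl) (T.θ n ≫ biprod.inl + R''.d n ≫ biprod.inr)
  aug := biprod.desc (R'.aug ≫ α) T.σ
  dd n := by
    ext1
    · simp only [biprod.inl_desc_assoc, Category.assoc, biprod.inl_desc, comp_zero]
      rw [← Category.assoc, R'.dd, zero_comp]
    · simp only [biprod.inr_desc_assoc, Preadditive.add_comp, Preadditive.comp_add,
        Category.assoc, biprod.inl_desc, biprod.inr_desc, comp_zero]
      rw [← Category.assoc (R''.d (n+1)) (R''.d n), R''.dd, zero_comp, add_zero,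
        ← Category.assoc, ← Category.assoc, ← Preadditive.add_comp, T.θ_succ, zero_comp]
  daug := by
    ext1
    · simp only [biprod.inl_desc_assoc, Category.assoc, biprod.inl_desc, comp_zero]
      rw [← Category.assoc, R'.daug, zero_comp]
    · simp only [biprod.inr_desc_assoc, Preadditive.add_comp, Category.assoc, biprod.inl_desc,
        biprod.inr_desc, comp_zero]
      exact T.θ_zero

/-- The morphism into a term of the horseshoe resolution with the given two components. -/
noncomputable def hLift {A : D} (n : ℕ) (a : A ⟶ R'.obj n) (b : A ⟶ R''.obj n) :
    A ⟶ (horseshoe T).obj n :=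
  biprod.lift a b

/-- The morphism out of a term of the horseshoe resolution with the given two components. -/
noncomputable def hDesc (n : ℕ) (a : R'.obj n ⟶ N) (b : R''.obj n ⟶ N) :
    (horseshoe T).obj n ⟶ N :=
  biprod.desc a b

lemma exists_eq_hLift {A : D} {n : ℕ} (u : A ⟶ (horseshoe T).obj n) :
    ∃ a b, u = hLift T n a b := by
  change A ⟶ R'.obj n ⊞ R''.obj n at u
  refine ⟨u ≫ biprod.fst, u ≫ biprod.snd, ?_⟩
  change u = biprod.lift _ _
  ext1 <;> simp

lemma hLift_eq_zero {A : D} {n : ℕ} {a : A ⟶ R'.obj n} {b : A ⟶ R''.obj n} :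
    hLift T n a b = 0 ↔ a = 0 ∧ b = 0 := by
  change biprod.lift a b = 0 ↔ _
  refine ⟨fun h => ⟨?_, ?_⟩, ?_⟩
  · simpa using congrArg (· ≫ biprod.fst) h
  · simpa using congrArg (· ≫ biprod.snd) h
  · rintro ⟨rfl, rfl⟩
    ext1 <;> simp

lemma hLift_d {A : D} (n : ℕ) (a : A ⟶ R'.obj (n+1)) (b : A ⟶ R''.obj (n+1)) :
    hLift T (n+1) a b ≫ (horseshoe T).d n =
      hLift T n (a ≫ R'.d n + b ≫ T.θ n) (b ≫ R''.d n) := by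
  change biprod.lift a b ≫ biprod.desc (R'.d n ≫ biprod.inl)
    (T.θ n ≫ biprod.inl + R''.d n ≫ biprod.inr) = biprod.lift _ _
  rw [biprod.lift_desc]
  ext1 <;> simp

lemma hLift_aug {A : D} (a : A ⟶ R'.obj 0) (b : A ⟶ R''.obj 0) :
    hLift T 0 a b ≫ (horseshoe T).aug = a ≫ R'.aug ≫ α + b ≫ T.σ :=
  biprod.lift_desc

lemma exists_eq_hDesc {n : ℕ} (u : (horseshoe T).obj n ⟶ N) :
    ∃ a b, u = hDesc T n a b := by
  change R'.obj n ⊞ R''.obj n ⟶ N at u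
  refine ⟨biprod.inl ≫ u, biprod.inr ≫ u, ?_⟩
  change u = biprod.desc _ _
  ext1 <;> simp

lemma hDesc_inj {n : ℕ} {a a₁ : R'.obj n ⟶ N} {b b₁ : R''.obj n ⟶ N} :
    hDesc T n a b = hDesc T n a₁ b₁ ↔ a = a₁ ∧ b = b₁ := by
  change biprod.desc a b = biprod.desc a₁ b₁ ↔ _
  refine ⟨fun h => ⟨?_, ?_⟩, ?_⟩
  · simpa using congrArg (biprod.inl ≫ ·) h
  · simpa using congrArg (biprod.inr ≫ ·) h
  · rintro ⟨rfl, rfl⟩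
    rfl

lemma hDesc_zero (n : ℕ) : hDesc T n (0 : R'.obj n ⟶ N) 0 = 0 := by
  change (biprod.desc 0 0 : R'.obj n ⊞ R''.obj n ⟶ N) = 0
  ext1 <;> simp

lemma hDesc_add (n : ℕ) (a a₁ : R'.obj n ⟶ N) (b b₁ : R''.obj n ⟶ N) :
    hDesc T n (a + a₁) (b + b₁) = hDesc T n a b + hDesc T n a₁ b₁ := by
  change biprod.desc _ _ = (biprod.desc a b + biprod.desc a₁ b₁ : R'.obj n ⊞ R''.obj n ⟶ N)
  ext1 <;> simp

lemma d_hDesc (n : ℕ) (a : R'.obj n ⟶ N) (b : R''.obj n ⟶ N) :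
    (horseshoe T).d n ≫ hDesc T n a b =
      hDesc T (n+1) (R'.d n ≫ a) (T.θ n ≫ a + R''.d n ≫ b) := by
  change (biprod.desc (R'.d n ≫ biprod.inl)
    (T.θ n ≫ biprod.inl + R''.d n ≫ biprod.inr) ≫ biprod.desc a b :
      R'.obj (n+1) ⊞ R''.obj (n+1) ⟶ N) = biprod.desc _ _
  ext1
  · simp
  · simp only [biprod.inr_desc_assoc, biprod.inr_desc, Preadditive.add_comp, Category.assoc,
      biprod.inl_desc]

lemma horseshoe_isProper {X : Set D} (w : α ≫ β = 0) (hac : ShortHomAcyclic X α β)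
    (hR'p : R'.IsProper X) (hR''p : R''.IsProper X) : (horseshoe T).IsProper X := by
  intro A hA
  refine ⟨fun f => ?_, fun f hf => ?_, fun n f hf => ?_⟩
  · obtain ⟨g'', hg''⟩ := (hR''p A hA).1 (f ≫ β)
    obtain ⟨v, hv⟩ := (hac A hA).2.1 (f - g'' ≫ T.σ) (by
      rw [Preadditive.sub_comp, Category.assoc, T.σβ, hg'', sub_self])
    obtain ⟨g', rfl⟩ := (hR'p A hA).1 v
    refine ⟨hLift T _ g' g'', ?_⟩
    rw [hLift_aug, ← Category.assoc, hv, sub_add_cancel]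
  · obtain ⟨f', f'', rfl⟩ := exists_eq_hLift T f
    rw [hLift_aug] at hf
    obtain ⟨g'', rfl⟩ := (hR''p A hA).2.1 f'' (by
      have h := congrArg (· ≫ β) hf
      simpa [w, T.σβ] using h)
    obtain ⟨g', hg'⟩ := (hR'p A hA).2.1 (f' - g'' ≫ T.θ 0) (by
      refine (hac A hA).1 _ ?_
      rw [Category.assoc, Preadditive.sub_comp, Category.assoc,
        eq_neg_of_add_eq_zero_left T.θ_zero, Preadditive.comp_neg, sub_neg_eq_add,
        ← Category.assoc g'', hf])
    refine ⟨hLift T _ g' g'', ?_⟩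
    rw [hLift_d, hg', sub_add_cancel]
  · obtain ⟨f', f'', rfl⟩ := exists_eq_hLift T f
    rw [hLift_d, hLift_eq_zero] at hf
    obtain ⟨h1, h2⟩ := hf
    obtain ⟨g'', rfl⟩ := (hR''p A hA).2.2 n f'' h2
    obtain ⟨g', hg'⟩ := (hR'p A hA).2.2 n (f' - g'' ≫ T.θ (n+1)) (by
      rw [Preadditive.sub_comp, Category.assoc, eq_neg_of_add_eq_zero_left (T.θ_succ n),
        Preadditive.comp_neg, sub_neg_eq_add, ← Category.assoc g'', h1])
    refine ⟨hLift T _ g' g'', ?_⟩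
    rw [hLift_d, hg', sub_add_cancel]

/-! ### Cochain maps -/

lemma hDesc_mem_cocycles {i : ℕ} (a : R'.obj i ⟶ N) (b : R''.obj i ⟶ N) :
    hDesc T i a b ∈ (horseshoe T).cocycles N i ↔
      R'.d i ≫ a = 0 ∧ T.θ i ≫ a + R''.d i ≫ b = 0 := by
  rw [mem_cocycles, d_hDesc, ← hDesc_zero, hDesc_inj]

variable (N)

/-- The cochain map `u'' ↦ (0, u'')`. -/
noncomputable def inflHom (i : ℕ) : (R''.obj i ⟶ N) →+ ((horseshoe T).obj i ⟶ N) :=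
  AddMonoidHom.mk' (fun u => hDesc T i 0 u) (fun a b => by
    rw [← hDesc_add, add_zero])

/-- The cochain map `(u', u'') ↦ u'`. -/
noncomputable def resHom (i : ℕ) : ((horseshoe T).obj i ⟶ N) →+ (R'.obj i ⟶ N) :=
  AddMonoidHom.mk' (fun u => (biprod.inl : R'.obj i ⟶ R'.obj i ⊞ R''.obj i) ≫ u)
    (fun _ _ => Preadditive.comp_add _ _ _ _ _ _)

/-- The cochain-level connecting map `u' ↦ θ ≫ u'`. -/
noncomputable def connHom (i : ℕ) : (R'.obj i ⟶ N) →+ (R''.obj (i+1) ⟶ N) :=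
  AddMonoidHom.mk' (fun u => T.θ i ≫ u) (fun _ _ => Preadditive.comp_add _ _ _ _ _ _)

variable {N}

lemma inflHom_apply (i : ℕ) (u : R''.obj i ⟶ N) : inflHom T N i u = hDesc T i 0 u := rfl

lemma resHom_desc (i : ℕ) (a : R'.obj i ⟶ N) (b : R''.obj i ⟶ N) :
    resHom T N i (hDesc T i a b) = a :=
  biprod.inl_desc _ _

lemma connHom_apply (i : ℕ) (u : R'.obj i ⟶ N) : connHom T N i u = T.θ i ≫ u := rfl

lemma inflHom_cocycles (i : ℕ) (u : R''.obj i ⟶ N) (hu : u ∈ R''.cocycles N i) :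
    inflHom T N i u ∈ (horseshoe T).cocycles N i := by
  rw [inflHom_apply, hDesc_mem_cocycles]
  simpa using R''.mem_cocycles.1 hu

lemma inflHom_coboundaries (i : ℕ) (u : R''.obj i ⟶ N) (hu : u ∈ R''.coboundaries N i) :
    inflHom T N i u ∈ (horseshoe T).coboundaries N i := by
  cases i with
  | zero =>
    rw [R''.mem_coboundaries_zero.1 hu, map_zero]
    exact zero_mem _
  | succ n =>
    obtain ⟨v, rfl⟩ := R''.mem_coboundaries_succ.1 hu
    refine (mem_coboundaries_succ _).2 ⟨hDesc T n 0 v, ?_⟩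
    rw [d_hDesc, inflHom_apply, comp_zero, comp_zero, zero_add]

lemma resHom_cocycles (i : ℕ) (u : (horseshoe T).obj i ⟶ N)
    (hu : u ∈ (horseshoe T).cocycles N i) : resHom T N i u ∈ R'.cocycles N i := by
  obtain ⟨a, b, rfl⟩ := exists_eq_hDesc T u
  rw [resHom_desc]
  exact ((hDesc_mem_cocycles T a b).1 hu).1

lemma resHom_coboundaries (i : ℕ) (u : (horseshoe T).obj i ⟶ N)
    (hu : u ∈ (horseshoe T).coboundaries N i) : resHom T N i u ∈ R'.coboundaries N i := by
  cases i with
  | zero =>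
    rw [(mem_coboundaries_zero _).1 hu, map_zero]
    exact zero_mem _
  | succ n =>
    obtain ⟨v, rfl⟩ := (mem_coboundaries_succ _).1 hu
    obtain ⟨a, b, rfl⟩ := exists_eq_hDesc T v
    rw [d_hDesc, resHom_desc]
    exact R'.mem_coboundaries_succ.2 ⟨a, rfl⟩

/-- Coboundaries of `Hom(R', N)` lift to coboundaries of `Hom(R, N)`. -/
lemma exists_coboundary_lift (i : ℕ) (a : R'.obj i ⟶ N) (ha : a ∈ R'.coboundaries N i) :
    ∃ b : R''.obj i ⟶ N,
      hDesc T i a b ∈ (horseshoe T).coboundaries N i := by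
  cases i with
  | zero =>
    rw [R'.mem_coboundaries_zero.1 ha]
    refine ⟨0, ?_⟩
    rw [hDesc_zero]
    exact zero_mem _
  | succ n =>
    obtain ⟨v, rfl⟩ := R'.mem_coboundaries_succ.1 ha
    exact ⟨_, (mem_coboundaries_succ _).2 ⟨hDesc T n v 0, d_hDesc T n v 0⟩⟩

lemma connHom_cocycles (i : ℕ) (u : R'.obj i ⟶ N) (hu : u ∈ R'.cocycles N i) :
    connHom T N i u ∈ R''.cocycles N (i+1) := by
  rw [mem_cocycles] at hu
  rw [connHom_apply, mem_cocycles, ← Category.assoc, eq_neg_of_add_eq_zero_right (T.θ_succ i),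
    Preadditive.neg_comp, Category.assoc, hu, comp_zero, neg_zero]

lemma connHom_coboundaries (i : ℕ) (u : R'.obj i ⟶ N) (hu : u ∈ R'.coboundaries N i) :
    connHom T N i u ∈ R''.coboundaries N (i+1) := by
  cases i with
  | zero =>
    rw [R'.mem_coboundaries_zero.1 hu, map_zero]
    exact zero_mem _
  | succ n =>
    obtain ⟨v, rfl⟩ := R'.mem_coboundaries_succ.1 hu
    refine R''.mem_coboundaries_succ.2 ⟨-(T.θ n ≫ v), ?_⟩
    rw [connHom_apply, ← Category.assoc, eq_neg_of_add_eq_zero_left (T.θ_succ n),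
      Preadditive.neg_comp, Category.assoc, Preadditive.comp_neg]

/-! ### The long exact sequence -/

variable (N)

/-- The map `Ext̲ⁱ(M″, N) → Ext̲ⁱ(M, N)`. -/
noncomputable def extInfl (i : ℕ) : R''.ExtGrp N i →+ (horseshoe T).ExtGrp N i :=
  extMap (inflHom T N i) (inflHom_cocycles T i) (inflHom_coboundaries T i)

/-- The map `Ext̲ⁱ(M, N) → Ext̲ⁱ(M′, N)`. -/
noncomputable def extRes (i : ℕ) : (horseshoe T).ExtGrp N i →+ R'.ExtGrp N i :=
  extMap (resHom T N i) (resHom_cocycles T i) (resHom_coboundaries T i)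

/-- The connecting map `Ext̲ⁱ(M′, N) → Ext̲ⁱ⁺¹(M″, N)`. -/
noncomputable def extConn (i : ℕ) : R'.ExtGrp N i →+ R''.ExtGrp N (i+1) :=
  extMap (connHom T N i) (connHom_cocycles T i) (connHom_coboundaries T i)

lemma extInfl_zero_injective : Function.Injective (extInfl T N 0) := by
  rw [injective_iff_map_eq_zero]
  intro x hx
  obtain ⟨⟨u, hu⟩, rfl⟩ := R''.extMk_surjective 0 x
  rw [extInfl, extMap_extMk, extMk_eq_zero, mem_coboundaries_zero] at hx
  rw [extMk_eq_zero, mem_coboundaries_zero]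
  exact ((hDesc_inj T).1 (hx.trans (hDesc_zero T 0).symm)).2

lemma exact_extInfl_extRes (i : ℕ) : Function.Exact (extInfl T N i) (extRes T N i) := by
  intro x
  constructor
  · intro hx
    obtain ⟨⟨u, hu⟩, rfl⟩ := (horseshoe T).extMk_surjective i x
    obtain ⟨a, b, rfl⟩ := exists_eq_hDesc T u
    rw [extRes, extMap_extMk, extMk_eq_zero] at hx
    simp only [resHom_desc] at hx
    -- Subtracting a coboundary with first component `a` leaves a cocycle of the form `(0, b - c)`.
    obtain ⟨c, hc⟩ := exists_coboundary_lift T i a hx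
    have h1 := ((hDesc_mem_cocycles T a b).1 hu).2
    have h2 := ((hDesc_mem_cocycles T a c).1 (coboundaries_le_cocycles _ i hc)).2
    have hbc : b - c ∈ R''.cocycles N i := by
      rw [mem_cocycles, Preadditive.comp_sub, sub_eq_zero]
      exact add_left_cancel (h1.trans h2.symm)
    refine ⟨R''.extMk N i ⟨b - c, hbc⟩, ?_⟩
    rw [extInfl, extMap_extMk]
    refine extMk_eq ?_
    have key : inflHom T N i (b - c) - hDesc T i a b = -hDesc T i a c := by
      rw [inflHom_apply, sub_eq_iff_eq_add, eq_neg_add_iff_add_eq, ← hDesc_add, hDesc_inj]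
      exact ⟨add_zero a, add_sub_cancel c b⟩
    exact key ▸ neg_mem hc
  · rintro ⟨y, rfl⟩
    obtain ⟨⟨u, hu⟩, rfl⟩ := R''.extMk_surjective i y
    rw [extInfl, extMap_extMk, extRes, extMap_extMk, extMk_eq_zero]
    simp only [inflHom_apply, resHom_desc]
    exact zero_mem _

lemma exact_extRes_extConn (i : ℕ) : Function.Exact (extRes T N i) (extConn T N i) := by
  intro x
  constructor
  · intro hx
    obtain ⟨⟨a, ha⟩, rfl⟩ := R'.extMk_surjective i x
    rw [extConn, extMap_extMk, extMk_eq_zero, mem_coboundaries_succ] at hx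
    obtain ⟨b, hb⟩ := hx
    replace hb : R''.d i ≫ b = T.θ i ≫ a := hb
    refine ⟨(horseshoe T).extMk N i ⟨hDesc T i a (-b), (hDesc_mem_cocycles T _ _).2
      ⟨ha, by rw [Preadditive.comp_neg, hb, add_neg_cancel]⟩⟩, ?_⟩
    rw [extRes, extMap_extMk]
    simp only [resHom_desc]
  · rintro ⟨y, rfl⟩
    obtain ⟨⟨u, hu⟩, rfl⟩ := (horseshoe T).extMk_surjective i y
    obtain ⟨a, b, rfl⟩ := exists_eq_hDesc T u
    rw [extRes, extMap_extMk, extConn, extMap_extMk, extMk_eq_zero, mem_coboundaries_succ]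
    simp only [resHom_desc, connHom_apply]
    refine ⟨-b, ?_⟩
    rw [eq_neg_of_add_eq_zero_left ((hDesc_mem_cocycles T a b).1 hu).2, Preadditive.comp_neg]

lemma exact_extConn_extInfl (i : ℕ) : Function.Exact (extConn T N i) (extInfl T N (i+1)) := by
  intro x
  constructor
  · intro hx
    obtain ⟨⟨u, hu⟩, rfl⟩ := R''.extMk_surjective (i+1) x
    rw [extInfl, extMap_extMk, extMk_eq_zero, mem_coboundaries_succ] at hx
    obtain ⟨v, hv⟩ := hx
    obtain ⟨a, b, rfl⟩ := exists_eq_hDesc T v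
    obtain ⟨h1, h2⟩ := (hDesc_inj T).1 ((d_hDesc T i a b).symm.trans hv)
    replace h2 : T.θ i ≫ a + R''.d i ≫ b = u := h2
    refine ⟨R'.extMk N i ⟨a, h1⟩, ?_⟩
    rw [extConn, extMap_extMk]
    refine extMk_eq (R''.mem_coboundaries_succ.2 ⟨-b, ?_⟩)
    simp only [connHom_apply]
    rw [← h2, Preadditive.comp_neg]
    abel
  · rintro ⟨y, rfl⟩
    obtain ⟨⟨a, ha⟩, rfl⟩ := R'.extMk_surjective i y
    rw [extConn, extMap_extMk, extInfl, extMap_extMk, extMk_eq_zero, mem_coboundaries_succ]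
    -- `(0, θ ≫ a)` is the differential of `(a, 0)` because `a` is a cocycle.
    refine ⟨hDesc T i a 0, ?_⟩
    rw [d_hDesc, (R'.mem_cocycles).1 ha, comp_zero, add_zero]
    rfl

end Horseshoe

end LeftRes

end BalancedSystems

open BalancedSystems in
/-- If `X` is closed under finite coproducts,
`0 → M′ → M → M″ → 0` is a `Hom(X,−)`-acyclic complex and `M′, M″ ∈ LPRes(X)`,
then `M ∈ LPRes(X)` and there is a long exact sequence
`0 → Ext̲⁰(M″,N) → Ext̲⁰(M,N) → Ext̲⁰(M′,N) → Ext̲¹(M″,N) → ⋯`. -/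
theorem statement4 {C : Type u} [Category.{v} C] [Abelian C]
    (𝒳 : Set C) (h𝒳 : IsoClosed 𝒳) (hcp : FinCoprodClosed 𝒳)
    {M' M M'' : C} (α : M' ⟶ M) (β : M ⟶ M'') (w : α ≫ β = 0)
    (hac : ShortHomAcyclic 𝒳 α β) (N : C)
    (R' : LeftRes M') (hR'c : R'.InClass 𝒳) (hR'p : R'.IsProper 𝒳)
    (R'' : LeftRes M'') (hR''c : R''.InClass 𝒳) (hR''p : R''.IsProper 𝒳) :
    M ∈ LPRes 𝒳 ∧
    ∃ (R : LeftRes M), R.InClass 𝒳 ∧ R.IsProper 𝒳 ∧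
      ∃ (f : ∀ i : ℕ, R''.ExtGrp N i →+ R.ExtGrp N i)
        (g : ∀ i : ℕ, R.ExtGrp N i →+ R'.ExtGrp N i)
        (δ : ∀ i : ℕ, R'.ExtGrp N i →+ R''.ExtGrp N (i+1)),
        Function.Injective (f 0) ∧
        ∀ i : ℕ, Function.Exact (f i) (g i) ∧ Function.Exact (g i) (δ i) ∧
          Function.Exact (δ i) (f (i+1)) := by
  obtain ⟨T⟩ := LeftRes.exists_twist hac hR'p hR''c
  have hc : (LeftRes.horseshoe T).InClass 𝒳 := fun n => hcp.2 (hR'c n) (hR''c n)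
  have hp := LeftRes.horseshoe_isProper T w hac hR'p hR''p
  exact ⟨⟨_, hc, hp⟩, LeftRes.horseshoe T, hc, hp, LeftRes.extInfl T N, LeftRes.extRes T N,
    LeftRes.extConn T N, LeftRes.extInfl_zero_injective T N, fun i =>
      ⟨LeftRes.exact_extInfl_extRes T N i, LeftRes.exact_extRes_extConn T N i,
        LeftRes.exact_extConn_extInfl T N i⟩⟩
end

section
/- Let A be an abelian category and X, X′, X″, ν, Y classes of objects of A such that: (X,X′,X″) is a cospan in LPRes(X); X is a generator in X″; ν is a relative generator in Y; and Ext¹_A(X″,ν) = Ext¹_A(X′,Y) = 0. Then every proper left X-resolution ⋯ → Xᵢ →dᵢ Xᵢ₋₁ → ⋯ → X₀ →d₀ M → 0 of an object M ∈ X″ with Ker(dᵢ) ∈ X′ for every i ≥ 0 is exact and Hom(−,Y)-acyclic. -/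
/-!
Write `K₋₁ = M` and `Kₙ` for the kernel of the differential out of the `n`-th term of the
resolution.

*Exactness.* All `Kₙ` lie in `X''`, so each is a quotient of an object `A` of `𝒳`. Properness lifts
the composite of `A ↠ Kₙ` with the inclusion of `Kₙ` through the next term of the resolution, which
therefore surjects onto `Kₙ` (`exact_of_lift`).

*`Hom(-,𝒴)`-acyclicity.* Exactness splits the resolution into short exact sequences
`0 → Kₙ → Xₙ → Kₙ₋₁ → 0`, and it suffices to extend every map `Kₙ → B` with `B ∈ 𝒴` to `Xₙ`.
Choose `0 → B' → V → B → 0` with `V ∈ ν` and `B' ∈ 𝒴`. As `Ext¹(Kₙ, B') = 0`, the map lifts to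
`Kₙ → V`; as `Ext¹(Kₙ₋₁, V) = 0`, the lift extends to `Xₙ → V`; composing with `V → B` gives the
extension (`exists_extension`).
-/


open CategoryTheory CategoryTheory.Limits

universe w w' v u

namespace BalancedSystems

section Helpers

variable {C : Type u} [Category.{v} C] [Abelian C]

lemma exists_lift_of_extZero [HasExt.{w} C] {S : ShortComplex C} (hS : S.ShortExact) {K : C}
    (h : ExtZero.{w} K S.X₁ 1) (u : K ⟶ S.X₃) : ∃ t : K ⟶ S.X₂, t ≫ S.g = u := by
  have : Subsingleton (Abelian.Ext.{w} K S.X₁ 1) := h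
  obtain ⟨x, hx⟩ := Abelian.Ext.covariant_sequence_exact₃ K hS (Abelian.Ext.mk₀ u) (zero_add 1)
    (Subsingleton.elim _ _)
  obtain ⟨t, rfl⟩ := (Abelian.Ext.mk₀_bijective _ _).2 x
  rw [Abelian.Ext.mk₀_comp_mk₀] at hx
  exact ⟨t, (Abelian.Ext.mk₀_bijective _ _).1 hx⟩

lemma exists_desc_of_extZero [HasExt.{w} C] {S : ShortComplex C} (hS : S.ShortExact) {V : C}
    (h : ExtZero.{w} S.X₃ V 1) (u : S.X₁ ⟶ V) : ∃ t : S.X₂ ⟶ V, S.f ≫ t = u := by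
  have : Subsingleton (Abelian.Ext.{w} S.X₃ V 1) := h
  obtain ⟨x, hx⟩ := Abelian.Ext.contravariant_sequence_exact₁ hS V (Abelian.Ext.mk₀ u) (add_zero 1)
    (Subsingleton.elim _ _)
  obtain ⟨t, rfl⟩ := (Abelian.Ext.mk₀_bijective _ _).2 x
  rw [Abelian.Ext.mk₀_comp_mk₀] at hx
  exact ⟨t, (Abelian.Ext.mk₀_bijective _ _).1 hx⟩

/-- A morphism from `kernel h` to an object of `𝒴` extends along `kernel h ⟶ L`, when `h : L ⟶ Z`
has image `I`, `Ext¹(kernel h, 𝒴) = 0` and `Ext¹(I, ν) = 0`. -/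
lemma exists_extension [HasExt.{w} C] {ν 𝒴 : Set C} (hrel : RelGenerator ν 𝒴)
    {L Z I : C} (h : L ⟶ Z) (q : L ⟶ I) (j : I ⟶ Z) [Epi q] [Mono j] (hqj : q ≫ j = h)
    (hK : ∀ B ∈ 𝒴, ExtZero.{w} (kernel h) B 1) (hI : ∀ V ∈ ν, ExtZero.{w} I V 1)
    {B : C} (hB : B ∈ 𝒴) (u : kernel h ⟶ B) : ∃ v : L ⟶ B, kernel.ι h ≫ v = u := by
  obtain ⟨V, hV, B', hB', f, g, wfg, hS⟩ := hrel.2 B hB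
  obtain ⟨t, ht⟩ := exists_lift_of_extZero hS (hK B' hB') u
  have wq : kernel.ι h ≫ q = 0 := by
    rw [← cancel_mono j, Category.assoc, hqj, kernel.condition, zero_comp]
  have hex : (ShortComplex.mk (kernel.ι h) q wq).ShortExact :=
    { exact := ShortComplex.exact_of_f_is_kernel _
        (KernelFork.IsLimit.ofι _ _
          (fun k hk => kernel.lift h k (by rw [← hqj, ← Category.assoc, hk, zero_comp]))
          (fun k hk => kernel.lift_ι _ _ _)
          (fun k hk m hm => by rw [← cancel_mono (kernel.ι h), hm, kernel.lift_ι]))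
      mono_f := inferInstanceAs (Mono (kernel.ι h))
      epi_g := ‹Epi q› }
  obtain ⟨s, hs⟩ := exists_desc_of_extZero hex (hI V hV) t
  dsimp only at s hs t ht
  exact ⟨s ≫ g, by rw [← Category.assoc, hs, ht]⟩

/-- A `Hom(𝒳,-)`-exact complex `P ⟶ Q ⟶ L` is exact at `Q` when `kernel g` is a quotient of an
object of `𝒳`: the lift to `P` of such a quotient map shows that `P ⟶ kernel g` is epi. -/
lemma exact_of_lift {P Q L : C} (f : P ⟶ Q) (g : Q ⟶ L) (w : f ≫ g = 0) {𝒳 X'' : Set C}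
    (hgen : GeneratorIn 𝒳 X'') (hK : kernel g ∈ X'')
    (hlift : ∀ A ∈ 𝒳, ∀ a : A ⟶ Q, a ≫ g = 0 → ∃ t : A ⟶ P, t ≫ f = a) :
    (ShortComplex.mk f g w).Exact := by
  obtain ⟨A, hA, p, hp⟩ := hgen _ hK
  obtain ⟨t, ht⟩ := hlift A hA (p ≫ kernel.ι g) (by simp)
  rw [ShortComplex.exact_iff_epi_kernel_lift]
  have e : t ≫ kernel.lift g f w = p := by
    rw [← cancel_mono (kernel.ι g), Category.assoc, kernel.lift_ι, ht]
  have : Epi (t ≫ kernel.lift g f w) := by rw [e]; exact hp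
  exact epi_of_epi t _

lemma exists_desc_kernel {P Q L Z : C} {f : P ⟶ Q} {g : Q ⟶ L} {h : L ⟶ Z} {w₁ : f ≫ g = 0}
    {w₂ : g ≫ h = 0} (h₁ : (ShortComplex.mk f g w₁).Exact) (h₂ : (ShortComplex.mk g h w₂).Exact)
    {B : C} (u : Q ⟶ B) (hu : f ≫ u = 0) :
    ∃ u' : kernel h ⟶ B, kernel.lift h g w₂ ≫ u' = u := by
  have hepi : Epi (kernel.lift h g w₂) := h₂.epi_kernelLift
  have w : f ≫ kernel.lift h g w₂ = 0 := by
    rw [← cancel_mono (kernel.ι h), Category.assoc, kernel.lift_ι, w₁, zero_comp]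
  have hex : (ShortComplex.mk f (kernel.lift h g w₂) w).Exact := by
    let φ : ShortComplex.mk f (kernel.lift h g w₂) w ⟶ ShortComplex.mk f g w₁ :=
      { τ₁ := 𝟙 _, τ₂ := 𝟙 _, τ₃ := kernel.ι h }
    have : Epi φ.τ₁ := inferInstanceAs (Epi (𝟙 _))
    have : IsIso φ.τ₂ := inferInstanceAs (IsIso (𝟙 _))
    have : Mono φ.τ₃ := inferInstanceAs (Mono (kernel.ι h))
    exact (ShortComplex.exact_iff_of_epi_of_isIso_of_mono φ).2 h₁
  exact ⟨hex.desc u hu, hex.g_desc u hu⟩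

end Helpers

end BalancedSystems

open BalancedSystems in
/-- Let `(X,X′,X″)` be a cospan in `LPRes(X)`, `X` a generator
in `X″`, `ν` a relative generator in `Y`, and suppose
`Ext¹(X″,ν) = Ext¹(X′,Y) = 0`. Then every proper left `X`-resolution of
`M ∈ X″` with all cycles in `X′` is exact and `Hom(−,Y)`-acyclic. -/
theorem statement9 {C : Type u} [Category.{v} C] [Abelian C] [HasExt.{w} C]
    (𝒳 X' X'' ν 𝒴 : Set C)
    (h1 : IsoClosed 𝒳) (h2 : IsoClosed X') (h3 : IsoClosed X'')
    (h4 : IsoClosed ν) (h5 : IsoClosed 𝒴)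
    (hcospan : 𝒳 ⊆ X'' ∧ X' ⊆ X'' ∧ X'' ⊆ LPRes 𝒳)
    (hgen : GeneratorIn 𝒳 X'')
    (hrelgen : RelGenerator ν 𝒴)
    (e1 : ∀ L ∈ X'', ∀ V ∈ ν, ExtZero.{w} L V 1)
    (e2 : ∀ L ∈ X', ∀ B ∈ 𝒴, ExtZero.{w} L B 1)
    {M : C} (hM : M ∈ X'')
    (R : LeftRes M) (hRc : R.InClass 𝒳) (hRp : R.IsProper 𝒳)
    (hker0 : (kernel R.aug : C) ∈ X') (hker : ∀ n : ℕ, (kernel (R.d n) : C) ∈ X') :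
    R.IsExactRes ∧ R.IsCoacyclic 𝒴 := by
  obtain ⟨-, hX', -⟩ := hcospan
  have hepi : Epi R.aug := by
    obtain ⟨A, hA, p, hp⟩ := hgen M hM
    obtain ⟨t, ht⟩ := (hRp A hA).1 p
    have : Epi (t ≫ R.aug) := by rw [ht]; exact hp
    exact epi_of_epi t _
  have hex0 : (ShortComplex.mk (R.d 0) R.aug R.daug).Exact :=
    exact_of_lift _ _ _ hgen (hX' hker0) fun A hA => (hRp A hA).2.1
  have hex : ∀ n : ℕ, (ShortComplex.mk (R.d (n+1)) (R.d n) (R.dd n)).Exact := fun n =>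
    exact_of_lift _ _ _ hgen (hX' (hker n)) fun A hA => (hRp A hA).2.2 n
  refine ⟨⟨hepi, hex0, hex⟩, fun B hB => ⟨fun u hu => ?_, fun u hu => ?_, ?_⟩⟩
  · rwa [← cancel_epi R.aug, comp_zero]
  · exact ⟨hex0.desc u hu, hex0.g_desc u hu⟩
  -- The image of the differential out of `Xₙ` is `M` for `n = 0`, the kernel of the augmentation
  -- for `n = 1`, and the kernel of a differential for `n ≥ 2`.
  · rintro (_ | _ | n) u hu
    · obtain ⟨u', rfl⟩ := exists_desc_kernel (hex 0) hex0 u hu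
      obtain ⟨v, hv⟩ := exists_extension hrelgen R.aug R.aug (𝟙 M) (Category.comp_id _)
        (e2 _ hker0) (e1 _ hM) hB u'
      exact ⟨v, by rw [← hv, ← Category.assoc, kernel.lift_ι]⟩
    · obtain ⟨u', rfl⟩ := exists_desc_kernel (hex 1) (hex 0) u hu
      have : Epi (kernel.lift R.aug (R.d 0) R.daug) := hex0.epi_kernelLift
      obtain ⟨v, hv⟩ := exists_extension hrelgen (R.d 0) (kernel.lift R.aug (R.d 0) R.daug)
        (kernel.ι R.aug) (kernel.lift_ι _ _ _) (e2 _ (hker 0)) (e1 _ (hX' hker0)) hB u'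
      exact ⟨v, by rw [← hv, ← Category.assoc, kernel.lift_ι]⟩
    · obtain ⟨u', rfl⟩ := exists_desc_kernel (hex (n+2)) (hex (n+1)) u hu
      have : Epi (kernel.lift (R.d n) (R.d (n+1)) (R.dd n)) := (hex n).epi_kernelLift
      obtain ⟨v, hv⟩ := exists_extension hrelgen (R.d (n+1))
        (kernel.lift (R.d n) (R.d (n+1)) (R.dd n)) (kernel.ι (R.d n)) (kernel.lift_ι _ _ _)
        (e2 _ (hker (n+1))) (e1 _ (hX' (hker n))) hB u'
      exact ⟨v, by rw [← hv, ← Category.assoc, kernel.lift_ι]⟩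
end
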